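/- arXiv:1409.6013 — 2 statements merged into one kernel-verified Lean document; each statement's English description precedes it below -/
import Mathlib

section
/- Let X = (X₁,…,X_d) be a random vector on ℝ^d with law ν having finite first moment, and let Q : [0,1]^d → ℝ^d transport the uniform measure on [0,1]^d onto ν, with multivariate L-moments λ_α = ∫_{[0,1]^d} Q(t) L_α(t) dt. Then for every multi-index α ∈ (ℕ \ {0})^d with α ≠ (1,…,1) and every coordinate i ∈ {1,…,d}, one has |⟨λ_α, b_i⟩| ≤ E[|X_i − X_i'|] = 2 λ₂(X_i), where X_i' is an independent copy of X_i, (b₁,…,b_d) is the canonical basis of ℝ^d, and λ₂(X_i) is the second univariate L-moment of X_i. -/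
open MeasureTheory Finset

/-- The `r`-th shifted Legendre polynomial on `[0,1]` (`r ≥ 1`). -/
noncomputable def shiftedLegendre (r : ℕ) (t : ℝ) : ℝ :=
  ∑ k ∈ Finset.range r, (-1 : ℝ) ^ k * ((r - 1).choose k : ℝ) ^ 2 * t ^ (r - 1 - k) * (1 - t) ^ k

/-- The multivariate Legendre polynomial `L_α(t) = ∏_k L_{α_k}(t_k)`. -/
noncomputable def multiLegendre {d : ℕ} (α : Fin d → ℕ) (t : Fin d → ℝ) : ℝ :=
  ∏ k, shiftedLegendre (α k) (t k)

/-- The uniform probability measure on the cube `[0,1]^d`. -/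
noncomputable def unifCube (d : ℕ) : Measure (Fin d → ℝ) :=
  volume.restrict (Set.univ.pi fun _ => Set.Icc (0 : ℝ) 1)

lemma beta_aux (k : ℕ) : ∀ m : ℕ, ((m + k).choose k : ℝ) * (m + k + 1) *
    (∫ t in (0:ℝ)..1, t ^ m * (1 - t) ^ k) = 1 := by
  induction k with
  | zero =>
    intro m
    simp [integral_pow]
    have : (m:ℝ) + 1 ≠ 0 := by positivity
    field_simp
  | succ k ih =>
    intro m
    have h1 := ih (m + 1)
    have hd : ∀ t : ℝ, HasDerivAt (fun t : ℝ => t ^ (m+1) * (1 - t) ^ (k+1))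
        ((m+1) * (t ^ m * (1 - t) ^ (k+1)) - (k+1) * (t ^ (m+1) * (1-t)^k)) t := by
      intro t
      have h2 := (hasDerivAt_pow (m+1) t).mul
        (((hasDerivAt_id t).const_sub 1).pow (k+1))
      refine h2.congr_deriv ?_
      simp
      ring
    have h3 := intervalIntegral.integral_eq_sub_of_hasDerivAt (a := 0) (b := 1)
      (fun t _ => hd t) (Continuous.intervalIntegrable (by fun_prop) _ _)
    rw [intervalIntegral.integral_sub (Continuous.intervalIntegrable (by fun_prop) _ _)
      (Continuous.intervalIntegrable (by fun_prop) _ _),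
      intervalIntegral.integral_const_mul, intervalIntegral.integral_const_mul] at h3
    simp at h3
    have hc : ((m + (k+1)).choose (k+1) : ℝ) * (k+1) = ((m+1+k).choose k : ℝ) * (m+1) := by
      have := Nat.choose_succ_right_eq (m+1+k) k
      rw [show m+1+k-k = m+1 by omega] at this
      rw [show m + (k+1) = m+1+k by ring]
      exact_mod_cast this
    have hk : (k:ℝ) + 1 ≠ 0 := by positivity
    push_cast at h1 ⊢
    apply mul_left_cancel₀ hk
    linear_combination (m + (k+1)+1) * (∫ t in (0:ℝ)..1, t ^ m * (1 - t) ^ (k+1)) * hc + ((m+1+k).choose k : ℝ) * (m + (k+1)+1) * h3 + (k+1) * h1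

lemma integral_shiftedLegendre (r : ℕ) (hr : 2 ≤ r) :
    ∫ t in (0:ℝ)..1, shiftedLegendre r t = 0 := by
  obtain ⟨n, rfl⟩ : ∃ n, r = n + 1 := ⟨r - 1, by omega⟩
  unfold shiftedLegendre
  rw [intervalIntegral.integral_finsetSum
    (fun k _ => Continuous.intervalIntegrable (by fun_prop) _ _)]
  have : ∀ k ∈ Finset.range (n+1), (∫ t in (0:ℝ)..1, (-1 : ℝ) ^ k * ((n + 1 - 1).choose k : ℝ) ^ 2
      * t ^ (n + 1 - 1 - k) * (1 - t) ^ k) = ((-1) ^ k * (n.choose k : ℝ)) * (1 / (n+1)) := by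
    intro k hk
    have hk' : k ≤ n := by simpa [Nat.lt_succ_iff] using hk
    obtain ⟨m, rfl⟩ := Nat.exists_eq_add_of_le' hk'
    have h := beta_aux k m
    simp only [mul_assoc, intervalIntegral.integral_const_mul]
    simp only [Nat.add_sub_cancel]
    push_cast
    have : (m:ℝ) + k + 1 ≠ 0 := by positivity
    field_simp
    linear_combination ((m+k).choose k : ℝ) * h
  rw [Finset.sum_congr rfl this, ← Finset.sum_mul]
  have h := Int.alternating_sum_range_choose_of_ne (n := n) (by omega)
  have h' : (∑ k ∈ Finset.range (n+1), (-1) ^ k * (n.choose k : ℝ)) = 0 := by exact_mod_cast h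
  rw [h', zero_mul]

lemma abs_shiftedLegendre_le (r : ℕ) (hr : 1 ≤ r) (t : ℝ) (ht : t ∈ Set.Icc (0:ℝ) 1) :
    |shiftedLegendre r t| ≤ 1 := by
  obtain ⟨n, rfl⟩ : ∃ n, r = n + 1 := ⟨r - 1, by omega⟩
  obtain ⟨a, ha⟩ : ∃ a : ℝ, a ^ 2 = t := ⟨√t, Real.sq_sqrt ht.1⟩
  obtain ⟨b, hb⟩ : ∃ b : ℝ, b ^ 2 = 1 - t := ⟨√(1-t), Real.sq_sqrt (by linarith [ht.2])⟩
  obtain ⟨ζ, hζ⟩ : ∃ ζ : ℂ, IsPrimitiveRoot ζ (n+1) :=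
    ⟨_, Complex.isPrimitiveRoot_exp (n+1) (by omega)⟩
  have hζ0 : ζ ≠ 0 := hζ.ne_zero (by omega)
  have hn : ‖ζ‖ = 1 := hζ.norm'_eq_one (by omega)
  have horth : ∀ k ∈ Finset.range (n+1), ∀ l ∈ Finset.range (n+1),
      ∑ j ∈ Finset.range (n+1), (ζ ^ k * (ζ ^ l)⁻¹) ^ j = if k = l then ((n:ℂ)+1) else 0 := by
    intro k hk l hl
    split_ifs with h
    · subst h
      simp [hζ0]
    · have hw : ζ ^ k * (ζ ^ l)⁻¹ ≠ 1 := by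
        intro hw
        apply h
        apply hζ.pow_inj (by simpa using hk) (by simpa using hl)
        field_simp at hw
        exact hw
      have h1 := mul_geom_sum (ζ ^ k * (ζ ^ l)⁻¹) (n+1)
      have h2 : (ζ ^ k * (ζ ^ l)⁻¹) ^ (n+1) = 1 := by
        rw [mul_pow, inv_pow, ← pow_mul, ← pow_mul, mul_comm k, mul_comm l, pow_mul, pow_mul,
          hζ.pow_eq_one]
        simp
      rw [h2, sub_self] at h1
      exact (mul_eq_zero.mp h1).resolve_left (sub_ne_zero.mpr hw)
  have key : ((n:ℂ)+1) * (shiftedLegendre (n+1) t : ℂ) =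
      ∑ j ∈ Finset.range (n+1), (((b:ℂ) * ζ ^ j + a) * (-(b:ℂ) * (ζ ^ j)⁻¹ + a)) ^ n := by
    have e : ∀ j ∈ Finset.range (n+1),
        (((b:ℂ) * ζ ^ j + a) * (-(b:ℂ) * (ζ ^ j)⁻¹ + a)) ^ n =
        ∑ k ∈ Finset.range (n+1), ∑ l ∈ Finset.range (n+1),
          ((b:ℂ)^k * a^(n-k) * n.choose k * ((-(b:ℂ))^l * a^(n-l) * n.choose l)) *
            (ζ ^ k * (ζ ^ l)⁻¹) ^ j := by
      intro j _
      rw [mul_pow, add_pow, add_pow, Finset.sum_mul_sum]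
      refine Finset.sum_congr rfl fun k _ => Finset.sum_congr rfl fun l _ => ?_
      simp only [mul_pow, inv_pow, ← pow_mul, mul_comm j]
      ring
    rw [Finset.sum_congr rfl e, Finset.sum_comm]
    unfold shiftedLegendre
    push_cast
    rw [Finset.mul_sum]
    refine Finset.sum_congr rfl fun k hk => ?_
    rw [Finset.sum_comm]
    simp only [← Finset.mul_sum]
    rw [Finset.sum_congr rfl (fun l hl => by rw [horth k hk l hl])]
    have hac : (a:ℂ)^2 = t := by exact_mod_cast ha
    have hbc : (b:ℂ)^2 = 1 - t := by exact_mod_cast hb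
    simp only [mul_ite, mul_zero, Finset.sum_ite_eq, hk, if_true, Nat.add_sub_cancel]
    rw [← hac] at hbc ⊢
    rw [← hbc, neg_pow, ← pow_mul, ← pow_mul]
    ring
  have hbd : ∀ j, ‖((b:ℂ) * ζ ^ j + a) * (-(b:ℂ) * (ζ ^ j)⁻¹ + a)‖ ≤ 1 := by
    intro j
    have hz : ‖ζ ^ j‖ = 1 := by simp [hn]
    generalize ζ ^ j = z at hz
    have hzi : z⁻¹ = (starRingEnd ℂ) z := Complex.inv_eq_conj hz
    rw [hzi]
    have hs : z.re ^ 2 + z.im ^ 2 = 1 := by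
      have := Complex.sq_norm z
      rw [hz, Complex.normSq_apply] at this
      linarith
    have hab : a ^ 2 + b ^ 2 = 1 := by linarith
    rw [← sq_le_one_iff₀ (norm_nonneg _), Complex.sq_norm, Complex.normSq_mul,
      Complex.normSq_apply, Complex.normSq_apply]
    simp
    have e1 : (b * z.re + a) * (b * z.re + a) + b * z.im * (b * z.im) = 1 + 2*a*b*z.re := by
      linear_combination b^2 * hs + hab
    have e2 : (-(b * z.re) + a) * (-(b * z.re) + a) + b * z.im * (b * z.im) = 1 - 2*a*b*z.re := by
      linear_combination b^2 * hs + hab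
    rw [e1, e2]
    nlinarith [sq_nonneg (2*a*b*z.re)]
  have h1 : ((n:ℝ)+1) * |shiftedLegendre (n+1) t| ≤ (n+1) := by
    have h2 := congrArg norm key
    rw [norm_mul, Complex.norm_real, Real.norm_eq_abs] at h2
    have h3 : ‖(n:ℂ)+1‖ = n + 1 := by exact_mod_cast Complex.norm_natCast (n+1)
    rw [h3] at h2
    rw [h2]
    refine (norm_sum_le _ _).trans ((Finset.sum_le_sum (g := fun _ => (1:ℝ)) fun j _ => ?_).trans ?_)
    · rw [norm_pow]; exact pow_le_one₀ (norm_nonneg _) (hbd j)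
    · simp
  have : (0:ℝ) < n + 1 := by positivity
  nlinarith

lemma unifCube_eq (d : ℕ) :
    unifCube d = Measure.pi (fun _ : Fin d => (volume.restrict (Set.Icc (0:ℝ) 1))) := by
  unfold unifCube
  rw [volume_pi, Measure.restrict_pi_pi]

lemma integral_multiLegendre {d : ℕ} (α : Fin d → ℕ) (hα : ∀ k, 1 ≤ α k)
    (hα1 : α ≠ fun _ => 1) : ∫ t, multiLegendre α t ∂(unifCube d) = 0 := by
  obtain ⟨k, hk⟩ := Function.ne_iff.mp hα1
  rw [unifCube_eq]
  unfold multiLegendre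
  rw [integral_fintype_prod_eq_prod (fun k t => shiftedLegendre (α k) t)]
  apply Finset.prod_eq_zero (Finset.mem_univ k)
  rw [integral_Icc_eq_integral_Ioc, ← intervalIntegral.integral_of_le zero_le_one]
  have := hα k
  exact integral_shiftedLegendre _ (by omega)

/-- For a random vector `X` with law `ν` having finite first moment, transported
from the uniform measure on `[0,1]^d` by `Q`, and any multi-index
`α ≠ (1,…,1)` with positive entries, the `i`-th coordinate of the L-moment
`λ_α = ∫ Q L_α` satisfies `|⟨λ_α, b_i⟩| ≤ E[|X_i − X_i'|] (= 2 λ₂(X_i))`,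
where `X_i'` is an independent copy of the `i`-th marginal `X_i`. -/
theorem abs_lmoment_le_two_lmoment_two {d : ℕ}
    (ν : Measure (Fin d → ℝ)) [IsProbabilityMeasure ν]
    (hmom : Integrable (fun x => ‖x‖) ν)
    (Q : (Fin d → ℝ) → (Fin d → ℝ)) (hQmeas : Measurable Q)
    (hQmap : Measure.map Q (unifCube d) = ν)
    (α : Fin d → ℕ) (hα : ∀ k, 1 ≤ α k) (hα1 : α ≠ fun _ => 1)
    (i : Fin d) :
    |∫ t, Q t i * multiLegendre α t ∂(unifCube d)|
      ≤ ∫ x, ∫ y, |x i - y i| ∂ν ∂ν := by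
  have hprob : IsProbabilityMeasure (unifCube d) := by
    constructor
    have := measure_univ (μ := ν)
    rwa [← hQmap, Measure.map_apply hQmeas MeasurableSet.univ, Set.preimage_univ] at this
  have hi : Integrable (fun x : Fin d → ℝ => x i) ν :=
    hmom.mono' (measurable_pi_apply i).aestronglyMeasurable
      (Filter.Eventually.of_forall fun x => norm_le_pi_norm x i)
  have hQi : Integrable (fun t => Q t i) (unifCube d) := by
    have h := hi
    rw [← hQmap] at h
    exact h.comp_measurable hQmeas
  have hcont : Continuous (multiLegendre α) := by
    unfold multiLegendre shiftedLegendre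
    fun_prop
  have hL : ∀ᵐ t ∂(unifCube d), ‖multiLegendre α t‖ ≤ 1 := by
    unfold unifCube
    rw [ae_restrict_iff' (MeasurableSet.univ_pi fun _ => measurableSet_Icc)]
    refine Filter.Eventually.of_forall fun t ht => ?_
    rw [Real.norm_eq_abs]
    unfold multiLegendre
    rw [Finset.abs_prod]
    exact Finset.prod_le_one (fun _ _ => abs_nonneg _)
      fun k _ => abs_shiftedLegendre_le _ (hα k) _ (ht k trivial)
  set m : ℝ := ∫ y, y i ∂ν with hm
  have hLint : Integrable (multiLegendre α) (unifCube d) :=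
    (integrable_const (1:ℝ)).mono' hcont.aestronglyMeasurable hL
  have hQL : Integrable (fun t => Q t i * multiLegendre α t) (unifCube d) :=
    hQi.mul_bdd hcont.aestronglyMeasurable hL
  have e1 : ∫ t, Q t i * multiLegendre α t ∂(unifCube d)
      = ∫ t, (Q t i - m) * multiLegendre α t ∂(unifCube d) := by
    simp only [sub_mul]
    rw [integral_sub hQL (hLint.const_mul m), integral_const_mul,
      integral_multiLegendre α hα hα1, mul_zero, sub_zero]
  have hprodint : Integrable (fun x : Fin d → ℝ => ∫ y, |x i - y i| ∂ν) ν := by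
    have h : Integrable (fun p : (Fin d → ℝ) × (Fin d → ℝ) => |p.1 i - p.2 i|) (ν.prod ν) :=
      ((hi.comp_fst ν).sub (hi.comp_snd ν)).abs
    exact h.integral_prod_left
  calc |∫ t, Q t i * multiLegendre α t ∂(unifCube d)|
      ≤ ∫ t, |Q t i - m| ∂(unifCube d) := by
        rw [e1, ← Real.norm_eq_abs]
        refine norm_integral_le_of_norm_le (hQi.sub (integrable_const m)).abs ?_
        filter_upwards [hL] with t ht
        rw [norm_mul, Real.norm_eq_abs (Q t i - m)]
        exact mul_le_of_le_one_right (abs_nonneg _) ht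
    _ = ∫ x, |x i - m| ∂ν := by
        rw [← hQmap, integral_map hQmeas.aemeasurable]
        exact (by fun_prop : Measurable fun x : Fin d → ℝ => |x i - m|).aestronglyMeasurable
    _ ≤ ∫ x, ∫ y, |x i - y i| ∂ν ∂ν := by
        refine integral_mono (hi.sub (integrable_const m)).abs hprodint fun x => ?_
        have : x i - m = ∫ y, (x i - y i) ∂ν := by
          rw [integral_sub (integrable_const _) hi]
          simp [hm]
        simp only [this]
        exact abs_integral_le_integral_abs
end

section
/- Let Ω ⊂ ℝ^d and let μ be a probability measure on Ω that gives no mass to sets of Hausdorff dimension at most d−1 (e.g. μ absolutely continuous). Then the set K = {T ∈ L¹(Ω, ℝ^d, μ) : T = ∇φ μ-almost everywhere for some convex function φ} is closed in L¹(Ω, ℝ^d, μ): if T_n ∈ K and T_n → T in L¹, then T agrees μ-a.e. with the gradient of a convex function. The key steps are: (i) each ∇φ_n is cyclically monotone, and cyclic monotonicity passes to the L¹-limit; (ii) by Rockafellar's theorem a cyclically monotone map is contained in the subgradient of a convex function φ; (iii) since μ charges no (d−1)-dimensional set, φ is μ-a.e. differentiable and ∇φ = T μ-a.e. -/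
open MeasureTheory Filter
open scoped ENNReal

/-- `T` is (μ-a.e.) the gradient of a convex function: there is a convex set
`C` of full `μ`-measure and a function `φ`, convex on `C`, such that
`T = ∇φ` μ-almost everywhere. -/
def IsMonotoneMap {d : ℕ} (μ : Measure (EuclideanSpace ℝ (Fin d)))
    (T : EuclideanSpace ℝ (Fin d) → EuclideanSpace ℝ (Fin d)) : Prop :=
  ∃ C : Set (EuclideanSpace ℝ (Fin d)), Convex ℝ C ∧ μ Cᶜ = 0 ∧
    ∃ φ : EuclideanSpace ℝ (Fin d) → ℝ, ConvexOn ℝ C φ ∧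
      ∀ᵐ u ∂μ, HasGradientAt φ (T u) u

namespace MonoAux

/-- `p` is a subgradient at `x` of `φ` on `C`. -/
def SG {E : Type*} [NormedAddCommGroup E] [InnerProductSpace ℝ E]
    (φ : E → ℝ) (C : Set E) (x p : E) : Prop :=
  x ∈ C ∧ ∀ v ∈ C, φ x + inner ℝ p (v - x) ≤ φ v

/-- Chains starting at `u₀`, with last point and accumulated value. -/
inductive Reach {E : Type*} [NormedAddCommGroup E] [InnerProductSpace ℝ E]
    (T : E → E) (A : Set E) (u₀ : E) : E → ℝ → Prop
  | base : Reach T A u₀ u₀ 0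
  | step (u : E) (s : ℝ) (w : E) (h : Reach T A u₀ u s) (hw : w ∈ A) :
      Reach T A u₀ w (s + inner ℝ (T u) (w - u))

section general

variable {E : Type*} [NormedAddCommGroup E] [InnerProductSpace ℝ E]

theorem Reach.mem {T : E → E} {A : Set E} {u₀ u : E} {s : ℝ} (h0 : u₀ ∈ A)
    (h : Reach T A u₀ u s) : u ∈ A := by
  cases h with
  | base => exact h0
  | step u s w h hw => exact hw

theorem reach_le {T : E → E} {A C : Set E} {φ : E → ℝ} {u₀ u : E} {s : ℝ} (h0 : u₀ ∈ A)
    (hA : ∀ a ∈ A, SG φ C a (T a)) (h : Reach T A u₀ u s) : s ≤ φ u - φ u₀ := by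
  induction h with
  | base => simp
  | step u s w h hw ih =>
    have h1 := (hA u (h.mem h0)).2 w (hA w hw).1
    linarith

theorem cyc_of_SG {T : E → E} {A C : Set E} {φ : E → ℝ} {u₀ u : E} {s : ℝ} (h0 : u₀ ∈ A)
    (hA : ∀ a ∈ A, SG φ C a (T a)) (h : Reach T A u₀ u s) :
    s + inner ℝ (T u) (u₀ - u) ≤ 0 := by
  have h1 := reach_le h0 hA h
  have h2 := (hA u (h.mem h0)).2 u₀ (hA u₀ h0).1
  linarith

theorem reach_lim {T : ℕ → E → E} {S : E → E} {A : Set E} {u₀ u : E} {s : ℝ} (h0 : u₀ ∈ A)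
    (hA : ∀ a ∈ A, Tendsto (fun n => T n a) atTop (nhds (S a))) (h : Reach S A u₀ u s) :
    ∃ t : ℕ → ℝ, (∀ n, Reach (T n) A u₀ u (t n)) ∧ Tendsto t atTop (nhds s) := by
  induction h with
  | base => exact ⟨fun _ => 0, fun _ => Reach.base, tendsto_const_nhds⟩
  | step u s w h hw ih =>
    obtain ⟨t, ht, hl⟩ := ih
    refine ⟨fun n => t n + inner ℝ (T n u) (w - u), fun n => Reach.step _ _ _ (ht n) hw, ?_⟩
    exact hl.add ((hA u (h.mem h0)).inner tendsto_const_nhds)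

/-- Rockafellar's theorem. -/
theorem rockafellar {T : E → E} {A : Set E} {u₀ : E} (h0 : u₀ ∈ A)
    (hcyc : ∀ u s, Reach T A u₀ u s → s + inner ℝ (T u) (u₀ - u) ≤ 0) :
    ∃ (C : Set E) (φ : E → ℝ), ConvexOn ℝ C φ ∧ (∀ a ∈ A, SG φ C a (T a)) ∧
      ∀ x ∈ C, ∀ ε > 0, ∃ p, ∀ v ∈ C, φ x + inner ℝ p (v - x) - ε ≤ φ v := by
  let F : E → Set ℝ := fun x => {r | ∃ u s, Reach T A u₀ u s ∧ r = s + inner ℝ (T u) (x - u)}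
  have hne : ∀ x, (F x).Nonempty := fun x => ⟨_, u₀, 0, Reach.base, rfl⟩
  let C : Set E := {x | BddAbove (F x)}
  let φ : E → ℝ := fun x => sSup (F x)
  have hle : ∀ x ∈ C, ∀ u s, Reach T A u₀ u s → s + inner ℝ (T u) (x - u) ≤ φ x :=
    fun x hx u s h => le_csSup hx ⟨u, s, h, rfl⟩
  have key : ∀ x ∈ C, ∀ y ∈ C, ∀ a b : ℝ, 0 ≤ a → 0 ≤ b → a + b = 1 →
      ∀ r ∈ F (a • x + b • y), r ≤ a * φ x + b * φ y := by
    rintro x hx y hy a b ha hb hab r ⟨u, s, h, rfl⟩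
    have h1 := mul_le_mul_of_nonneg_left (hle x hx u s h) ha
    have h2 := mul_le_mul_of_nonneg_left (hle y hy u s h) hb
    have : s + inner ℝ (T u) (a • x + b • y - u)
        = a * (s + inner ℝ (T u) (x - u)) + b * (s + inner ℝ (T u) (y - u)) := by
      have hb' : b = 1 - a := by linarith
      subst hb'
      simp only [inner_sub_right, inner_add_right, inner_smul_right]
      ring
    linarith
  refine ⟨C, φ, ⟨?_, ?_⟩, ?_, ?_⟩
  · intro x hx y hy a b ha hb hab
    exact ⟨_, fun r hr => key x hx y hy a b ha hb hab r hr⟩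
  · intro x hx y hy a b ha hb hab
    exact csSup_le (hne _) (key x hx y hy a b ha hb hab)
  · intro w hw
    refine ⟨⟨- inner ℝ (T w) (u₀ - w), ?_⟩, ?_⟩
    · rintro r ⟨u, s, h, rfl⟩
      have := hcyc w _ (Reach.step u s w h hw)
      linarith
    · intro v hv
      suffices φ w ≤ φ v - inner ℝ (T w) (v - w) by linarith
      refine csSup_le (hne _) ?_
      rintro r ⟨u, s, h, rfl⟩
      have := hle v hv w _ (Reach.step u s w h hw)
      linarith
  · intro x hx ε hε
    obtain ⟨r, ⟨u, s, h, rfl⟩, hr⟩ := exists_lt_of_lt_csSup (hne x) (sub_lt_self (φ x) hε)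
    refine ⟨T u, fun v hv => ?_⟩
    have := hle v hv u s h
    have e : inner ℝ (T u) (v - u) = inner ℝ (T u) (v - x) + inner ℝ (T u) (x - u) := by
      rw [← inner_add_right]; simp
    linarith

theorem SG_of_hasGradientAt [CompleteSpace E] {C : Set E} {φ : E → ℝ} {u p : E}
    (hφ : ConvexOn ℝ C φ) (hu : u ∈ C) (h : HasGradientAt φ p u) : SG φ C u p := by
  refine ⟨hu, fun v hv => ?_⟩
  have h1 : HasDerivAt (fun t : ℝ => φ (u + t • (v - u))) (inner ℝ p (v - u)) 0 := by
    have hl : HasDerivAt (fun t : ℝ => u + t • (v - u)) (v - u) 0 := by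
      simpa using ((hasDerivAt_id (0 : ℝ)).smul_const (v - u)).const_add u
    have hf : HasFDerivAt φ ((InnerProductSpace.toDual ℝ E) p) (u + (0 : ℝ) • (v - u)) := by
      simpa using h.hasFDerivAt
    have h9 := hf.comp_hasDerivAt (0 : ℝ) hl
    rw [InnerProductSpace.toDual_apply_apply] at h9
    exact h9
  have h2 := h1.tendsto_slope_zero_right
  have h3 : inner ℝ p (v - u) ≤ φ v - φ u := by
    refine le_of_tendsto h2 ?_
    filter_upwards [Ioo_mem_nhdsGT (zero_lt_one (α := ℝ))] with t ht
    have ht' : (0 : ℝ) ≤ 1 - t := by linarith [ht.2]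
    have hc := hφ.2 hu hv ht' ht.1.le (by ring)
    have e : (1 - t) • u + t • v = u + t • (v - u) := by module
    rw [e] at hc
    simp only [zero_add, zero_smul, add_zero, smul_eq_mul] at hc ⊢
    rw [inv_mul_le_iff₀ ht.1]
    linarith
  linarith

theorem SG_mono {C : Set E} {φ : E → ℝ} {x y p q : E} (h1 : SG φ C x p) (h2 : SG φ C y q) :
    ‖x - y‖ ≤ ‖(x + p) - (y + q)‖ := by
  have a := h1.2 y h2.1
  have b := h2.2 x h1.1
  have c : 0 ≤ inner ℝ (x - y) (p - q) := by
    rw [real_inner_comm]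
    simp only [inner_sub_left, inner_sub_right] at *
    linarith
  have e : (x + p) - (y + q) = (x - y) + (p - q) := by abel
  rw [e]
  refine le_of_sq_le_sq ?_ (norm_nonneg _)
  rw [norm_add_sq_real]
  nlinarith [sq_nonneg ‖p - q‖]

theorem SG_segment {C : Set E} {φ : E → ℝ} {x p q : E} (h1 : SG φ C x p) (h2 : SG φ C x q)
    {t : ℝ} (ht0 : 0 ≤ t) (ht1 : t ≤ 1) : SG φ C x (p + t • (q - p)) := by
  refine ⟨h1.1, fun v hv => ?_⟩
  have a := mul_le_mul_of_nonneg_left (h1.2 v hv) (sub_nonneg.2 ht1)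
  have b := mul_le_mul_of_nonneg_left (h2.2 v hv) ht0
  simp only [inner_add_left, inner_smul_left, inner_sub_left]
  simp
  linarith

/-- Normal vectors at non-interior points. -/
theorem exists_normal [FiniteDimensional ℝ E] {C : Set E} (hC : Convex ℝ C) {u : E} (hu : u ∈ C)
    (hi : u ∉ interior C) : ∃ n : E, n ≠ 0 ∧ ∀ v ∈ C, inner ℝ n (v - u) ≤ 0 := by
  have := FiniteDimensional.complete ℝ E
  by_cases hne : (interior C).Nonempty
  · obtain ⟨f, c, hf, h1, h2⟩ := geometric_hahn_banach_of_nonempty_interior hC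
      (convex_singleton u) (Set.disjoint_singleton_right.2 hi) hne (Set.singleton_nonempty u)
    refine ⟨(InnerProductSpace.toDual ℝ E).symm f, by simpa using hf, fun v hv => ?_⟩
    rw [InnerProductSpace.toDual_symm_apply, map_sub]
    linarith [h1 v hv, h2 u rfl]
  · rw [hC.interior_nonempty_iff_affineSpan_eq_top] at hne
    have hd : (affineSpan ℝ C).direction ≠ ⊤ := by
      intro h
      exact hne ((AffineSubspace.direction_eq_top_iff_of_nonempty
        ⟨u, subset_affineSpan ℝ C hu⟩).1 h)
    have ho : (affineSpan ℝ C).directionᗮ ≠ ⊥ := fun h =>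
      hd (Submodule.orthogonal_eq_bot_iff.1 h)
    obtain ⟨n, hn, hn0⟩ := Submodule.exists_mem_ne_zero_of_ne_bot ho
    refine ⟨n, hn0, fun v hv => le_of_eq ?_⟩
    rw [real_inner_comm]
    exact hn _ (AffineSubspace.vsub_mem_direction (subset_affineSpan ℝ C hv)
      (subset_affineSpan ℝ C hu))

theorem hasGradientAt_of_unique [FiniteDimensional ℝ E] [CompleteSpace E]
    {C : Set E} {φ : E → ℝ} {u p : E}
    (hφ : ConvexOn ℝ C φ) (hi : u ∈ interior C) (hp : SG φ C u p)
    (huniq : ∀ q, SG φ C u q → q = p)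
    (happ : ∀ x ∈ C, ∀ ε > 0, ∃ p, ∀ v ∈ C, φ x + inner ℝ p (v - x) - ε ≤ φ v) :
    HasGradientAt φ p u := by
  have hcont : ContinuousAt φ u := hφ.continuousOn_interior.continuousAt
    (isOpen_interior.mem_nhds hi)
  obtain ⟨r, hr, hball⟩ : ∃ r > 0, ∀ x, ‖x - u‖ < 2 * r → x ∈ C ∧ φ x < φ u + 1 := by
    have h1 : ∀ᶠ x in nhds u, x ∈ C ∧ φ x < φ u + 1 :=
      Filter.Eventually.and (mem_interior_iff_mem_nhds.1 hi) (hcont.eventually_lt_const (by linarith))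
    obtain ⟨r, hr, h⟩ := Metric.eventually_nhds_iff.1 h1
    refine ⟨r / 2, by positivity, fun x hx => h ?_⟩
    rw [dist_eq_norm]; linarith
  have claim : ∀ ε > 0, ∀ᶠ x in nhds u, ∀ q,
      (∀ v ∈ C, φ x + inner ℝ q (v - x) - ‖x - u‖ ^ 2 ≤ φ v) → ‖q - p‖ ≤ ε := by
    intro ε hε
    by_contra hcon
    rw [not_eventually] at hcon
    have hcon2 := hcon.and_eventually (Metric.ball_mem_nhds u hr)
    obtain ⟨x, hx, hx2⟩ := exists_seq_forall_of_frequently hcon2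
    have hx1 : ∀ n, ∃ q, (∀ v ∈ C, φ (x n) + inner ℝ q (v - x n) - ‖x n - u‖ ^ 2 ≤ φ v) ∧
        ε < ‖q - p‖ := by
      intro n
      have := (hx2 n).1
      push Not at this
      exact this
    choose q hq hqε using hx1
    have hxr : ∀ n, ‖x n - u‖ < r := fun n => by simpa [dist_eq_norm] using (hx2 n).2
    have hlow : ∀ n, φ u + inner ℝ p (x n - u) ≤ φ (x n) := fun n =>
      hp.2 _ (hball _ (by linarith [hxr n])).1
    have hbd : ∀ n, ‖q n‖ ≤ (1 + ‖p‖ * r + r ^ 2) / r := by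
      intro n
      by_cases hq0 : q n = 0
      · rw [hq0, norm_zero]; positivity
      have hqn : 0 < ‖q n‖ := norm_pos_iff.2 hq0
      set v := x n + (r / ‖q n‖) • q n with hv
      have hvx : v - x n = (r / ‖q n‖) • q n := by rw [hv]; abel
      have hn : ‖v - x n‖ = r := by
        rw [hvx, norm_smul, Real.norm_of_nonneg (by positivity)]; field_simp
      have hvu : ‖v - u‖ < 2 * r := by
        have := norm_add_le (v - x n) (x n - u)
        rw [sub_add_sub_cancel] at this
        linarith [hxr n]
      obtain ⟨hvC, hvφ⟩ := hball v hvu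
      have h1 := hq n v hvC
      rw [hvx, inner_smul_right, real_inner_self_eq_norm_sq] at h1
      have e : r / ‖q n‖ * ‖q n‖ ^ 2 = r * ‖q n‖ := by field_simp
      rw [e] at h1
      have h2 := hlow n
      have h3 := neg_le_of_abs_le (abs_real_inner_le_norm p (x n - u))
      have h4 : ‖p‖ * ‖x n - u‖ ≤ ‖p‖ * r :=
        mul_le_mul_of_nonneg_left (hxr n).le (norm_nonneg _)
      have h5 : ‖x n - u‖ ^ 2 ≤ r ^ 2 := pow_le_pow_left₀ (norm_nonneg _) (hxr n).le 2
      rw [le_div_iff₀ hr]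
      linarith
    have := FiniteDimensional.proper ℝ E
    obtain ⟨q', -, σ, hσ, hlim⟩ := (isCompact_closedBall (0 : E) _).tendsto_subseq
      (x := q) (fun n => mem_closedBall_zero_iff.2 (hbd n))
    have hxσ : Tendsto (fun n => x (σ n)) atTop (nhds u) := hx.comp hσ.tendsto_atTop
    have hq' : SG φ C u q' := by
      refine ⟨hp.1, fun v hv => ?_⟩
      have hl : Tendsto (fun n => φ (x (σ n)) + inner ℝ (q (σ n)) (v - x (σ n))
          - ‖x (σ n) - u‖ ^ 2) atTop (nhds (φ u + inner ℝ q' (v - u) - ‖u - u‖ ^ 2)) :=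
        ((hcont.tendsto.comp hxσ).add (hlim.inner (tendsto_const_nhds.sub hxσ))).sub
          ((hxσ.sub tendsto_const_nhds).norm.pow 2)
      have := le_of_tendsto hl (Eventually.of_forall fun n => hq (σ n) v hv)
      simpa using this
    have hpp := huniq q' hq'
    have hl2 : Tendsto (fun n => ‖q (σ n) - p‖) atTop (nhds ‖q' - p‖) :=
      (hlim.sub tendsto_const_nhds).norm
    have := ge_of_tendsto hl2 (Eventually.of_forall fun n => (hqε (σ n)).le)
    rw [hpp, sub_self, norm_zero] at this
    linarith
  rw [hasGradientAt_iff_isLittleO, Asymptotics.isLittleO_iff]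
  intro ε hε
  filter_upwards [claim (ε / 2) (by positivity), mem_interior_iff_mem_nhds.1 hi,
    Metric.ball_mem_nhds u (half_pos hε)] with x hx hxC hxb
  by_cases hxu : x = u
  · simp [hxu]
  have hpos : 0 < ‖x - u‖ := norm_pos_iff.2 (sub_ne_zero.2 hxu)
  have hxb' : ‖x - u‖ < ε / 2 := by simpa [dist_eq_norm] using hxb
  obtain ⟨q, hq⟩ := happ x hxC (‖x - u‖ ^ 2) (by positivity)
  have h1 := hx q hq
  have h2 := hq u hp.1
  have h3 := hp.2 x hxC
  have h4 := real_inner_le_norm (q - p) (x - u)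
  have h5 := mul_le_mul_of_nonneg_right h1 hpos.le
  have h6 := mul_le_mul_of_nonneg_right hxb'.le hpos.le
  rw [Real.norm_of_nonneg (by linarith)]
  have e : inner ℝ q (u - x) = - inner ℝ q (x - u) := by rw [← inner_neg_right, neg_sub]
  rw [inner_sub_left] at h4
  nlinarith

end general

theorem dimH_hyperplane {n : ℕ} (i : Fin (n + 1)) (c : ℝ) :
    dimH {y : EuclideanSpace ℝ (Fin (n + 1)) | y i = c} ≤ n := by
  let f : (Fin n → ℝ) → EuclideanSpace ℝ (Fin (n + 1)) := fun z => WithLp.toLp 2 (i.insertNth c z)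
  have hf : ContDiff ℝ 1 f := by
    rw [contDiff_euclidean]
    intro j
    refine Fin.succAboveCases i ?_ (fun k => ?_) j
    · simpa [f] using contDiff_const
    · simpa [f] using contDiff_apply ℝ ℝ k
  have h1 := hf.dimH_range_le
  rw [Module.finrank_fin_fun] at h1
  refine (dimH_mono ?_).trans h1
  intro y hy
  refine ⟨fun k => y (i.succAbove k), ?_⟩
  ext j
  refine Fin.succAboveCases i ?_ (fun k => ?_) j
  · simpa [f] using hy.symm
  · simp [f]

theorem dimH_nonunique {n : ℕ} (C : Set (EuclideanSpace ℝ (Fin (n + 1))))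
    (φ : EuclideanSpace ℝ (Fin (n + 1)) → ℝ) :
    dimH {x | ∃ p q, p ≠ q ∧ SG φ C x p ∧ SG φ C x q} ≤ n := by
  classical
  let D : Set (EuclideanSpace ℝ (Fin (n + 1))) := {y | ∃ x, SG φ C x (y - x)}
  let P : EuclideanSpace ℝ (Fin (n + 1)) → EuclideanSpace ℝ (Fin (n + 1)) :=
    fun y => if h : ∃ x, SG φ C x (y - x) then h.choose else 0
  have hP : ∀ y ∈ D, SG φ C (P y) (y - P y) := by
    intro y hy
    have e : P y = Exists.choose hy := dif_pos hy
    rw [e]; exact Exists.choose_spec hy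
  have hL : LipschitzOnWith 1 P D := by
    refine LipschitzOnWith.of_dist_le_mul fun y hy z hz => ?_
    have := SG_mono (hP y hy) (hP z hz)
    simpa [dist_eq_norm] using this
  have hPu : ∀ x p, SG φ C x p → x + p ∈ D ∧ P (x + p) = x := by
    intro x p h
    have hD : x + p ∈ D := ⟨x, by simpa using h⟩
    refine ⟨hD, ?_⟩
    have := SG_mono (hP _ hD) h
    simp only [add_sub_cancel, sub_self, norm_zero] at this
    exact sub_eq_zero.1 (norm_le_zero_iff.1 this)
  have hsub : {x | ∃ p q, p ≠ q ∧ SG φ C x p ∧ SG φ C x q} ⊆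
      ⋃ k : Fin (n + 1) × ℚ, P '' (D ∩ {y | y k.1 = (k.2 : ℝ)}) := by
    have main : ∀ x p q, SG φ C x p → SG φ C x q → ∀ i, p i < q i →
        x ∈ ⋃ k : Fin (n + 1) × ℚ, P '' (D ∩ {y | y k.1 = (k.2 : ℝ)}) := by
      intro x p q hp hq i hi
      obtain ⟨c, hc1, hc2⟩ := exists_rat_btwn (add_lt_add_right hi (x i))
      have hd : 0 < q i - p i := by linarith
      have hs := SG_segment hp hq (t := (c - x i - p i) / (q i - p i))
        (div_nonneg (by linarith) hd.le) ((div_le_one hd).2 (by linarith))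
      obtain ⟨h1, h2⟩ := hPu _ _ hs
      refine Set.mem_iUnion.2 ⟨(i, c), _, ⟨h1, ?_⟩, h2⟩
      simp
      field_simp
      ring
    rintro x ⟨p, q, hne, hp, hq⟩
    obtain ⟨i, hi⟩ : ∃ i, p i ≠ q i := by
      by_contra! h
      exact hne (by ext i; exact h i)
    rcases lt_or_gt_of_ne hi with h | h
    · exact main x p q hp hq i h
    · exact main x q p hq hp i h
  refine (dimH_mono hsub).trans ?_
  rw [dimH_iUnion]
  refine iSup_le fun k => ?_
  refine ((hL.mono Set.inter_subset_left).dimH_image_le).trans ?_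
  exact (dimH_mono Set.inter_subset_right).trans (dimH_hyperplane k.1 _)

end MonoAux

open MonoAux

/-- The set `K` of `μ`-a.e. gradients of convex functions is closed in
`L¹(Ω, ℝ^d, μ)`: if each `T_n` is μ-a.e. the gradient of a convex function,
all `T_n` and `T` are integrable, and `T_n → T` in `L¹(μ)`, then `T` is also
μ-a.e. the gradient of a convex function.  Here `μ` is a probability measure
on `Ω ⊂ ℝ^d` giving no mass to sets of Hausdorff dimension at most `d − 1`. -/
theorem monotoneMaps_closed_in_L1 {d : ℕ}
    (Ω : Set (EuclideanSpace ℝ (Fin d)))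
    (μ : Measure (EuclideanSpace ℝ (Fin d))) [IsProbabilityMeasure μ]
    (hΩfull : μ Ωᶜ = 0)
    (hdim : ∀ s : Set (EuclideanSpace ℝ (Fin d)), dimH s ≤ (d : ℝ≥0∞) - 1 → μ s = 0)
    (T : ℕ → EuclideanSpace ℝ (Fin d) → EuclideanSpace ℝ (Fin d))
    (Tlim : EuclideanSpace ℝ (Fin d) → EuclideanSpace ℝ (Fin d))
    (hT : ∀ m, IsMonotoneMap μ (T m))
    (hTint : ∀ m, Integrable (T m) μ) (hTlimint : Integrable Tlim μ)
    (hL1 : Tendsto (fun m => ∫ u, ‖T m u - Tlim u‖ ∂μ) atTop (nhds 0)) :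
    IsMonotoneMap μ Tlim := by
  obtain _ | n := d
  · exfalso
    have h := hdim Set.univ (by rw [dimH_countable (Set.to_countable _)]; exact zero_le)
    simp at h
  have hmeas : TendstoInMeasure μ T atTop Tlim := by
    refine tendstoInMeasure_of_tendsto_eLpNorm one_ne_zero (fun m => (hTint m).1) hTlimint.1 ?_
    have e : ∀ m, eLpNorm (T m - Tlim) 1 μ = ENNReal.ofReal (∫ u, ‖T m u - Tlim u‖ ∂μ) := by
      intro m
      rw [eLpNorm_one_eq_lintegral_enorm]
      exact (ofReal_integral_norm_eq_lintegral_enorm ((hTint m).sub hTlimint)).symm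
    simp_rw [e]
    simpa using ENNReal.tendsto_ofReal hL1
  obtain ⟨ns, -, hns⟩ := hmeas.exists_seq_tendsto_ae
  choose C hC hCμ φ hφ hgrad using hT
  let A : Set (EuclideanSpace ℝ (Fin (n + 1))) :=
    {u | Tendsto (fun i => T (ns i) u) atTop (nhds (Tlim u)) ∧
      ∀ m, SG (φ m) (C m) u (T m u)}
  have hA : ∀ᵐ u ∂μ, u ∈ A := by
    have h2 : ∀ᵐ u ∂μ, ∀ m, SG (φ m) (C m) u (T m u) := by
      rw [ae_all_iff]
      intro m
      have h3 : ∀ᵐ u ∂μ, u ∈ C m := hCμ m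
      filter_upwards [hgrad m, h3] with u h4 h5 using SG_of_hasGradientAt (hφ m) h5 h4
    exact hns.and h2
  obtain ⟨u₀, h0⟩ := hA.exists
  have hcyc : ∀ u s, Reach Tlim A u₀ u s → s + inner ℝ (Tlim u) (u₀ - u) ≤ 0 := by
    intro u s h
    obtain ⟨t, ht, hl⟩ := reach_lim (T := fun i => T (ns i)) h0 (fun a ha => ha.1) h
    have hl2 : Tendsto (fun i => t i + inner ℝ (T (ns i) u) (u₀ - u)) atTop
        (nhds (s + inner ℝ (Tlim u) (u₀ - u))) :=
      hl.add ((h.mem h0).1.inner tendsto_const_nhds)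
    exact le_of_tendsto hl2 (Eventually.of_forall fun i =>
      cyc_of_SG h0 (fun a ha => ha.2 (ns i)) (ht i))
  obtain ⟨K, ψ, hψ, hsg, happ⟩ := rockafellar h0 hcyc
  have hnull := hdim _ ((dimH_nonunique K ψ).trans (by simp))
  have hnull' : ∀ᵐ u ∂μ, ¬ ∃ p q, p ≠ q ∧ SG ψ K u p ∧ SG ψ K u q := by
    rw [ae_iff]; simpa using hnull
  refine ⟨K, hψ.1, ?_, ψ, hψ, ?_⟩
  · have : ∀ᵐ u ∂μ, u ∈ K := hA.mono fun u hu => (hsg u hu).1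
    exact this
  · filter_upwards [hA, hnull'] with u hu hun
    have hp := hsg u hu
    have huniq : ∀ q, SG ψ K u q → q = Tlim u := by
      intro q hq
      by_contra hne
      exact hun ⟨q, _, hne, hq, hp⟩
    refine hasGradientAt_of_unique hψ ?_ hp huniq happ
    by_contra hi
    obtain ⟨m, hm0, hm⟩ := exists_normal hψ.1 hp.1 hi
    have : SG ψ K u (Tlim u + m) := by
      refine ⟨hp.1, fun v hv => ?_⟩
      rw [inner_add_left]
      linarith [hm v hv, hp.2 v hv]
    exact hm0 (by simpa using huniq _ this)
end
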